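/- In the silent-consensus wrapper: if some correct node receives at most f messages in round 1 (hence does not participate in the inner protocol), then no correct node receives n - f or more messages in round 1, so every correct node sets its input to 0 and sends nothing in round 2, and consequently every correct node outputs 0. -/

import Mathlib

/-- If some correct node receives at most f round-1 messages, then no correct
node receives n - f or more round-1 messages, every correct node sends nothing
in round 2, and every correct node outputs 0 (false). -/
theorem silent_wrapper_nonparticipation
    (n f : ℕ) (hnf : 3 * f < n)
    (Faulty : Finset (Fin n)) (hF : Faulty.card ≤ f)
    (input : Fin n → Bool)
    (recv1 recv2 : Fin n → Finset (Fin n))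
    (output : Fin n → Bool)
    (hsend1 : ∀ v w : Fin n, v ∉ Faulty → w ∉ Faulty →
      (w ∈ recv1 v ↔ input w = true))
    (hsend2 : ∀ v w : Fin n, v ∉ Faulty → w ∉ Faulty →
      (w ∈ recv2 v ↔ (input w = true ∧ n - f ≤ (recv1 w).card)))
    (houtput : ∀ v : Fin n, v ∉ Faulty →
      (recv2 v).card ≤ f → output v = false)
    -- some correct node receives at most f round-1 messages
    (v₀ : Fin n) (hv₀ : v₀ ∉ Faulty) (hv₀card : (recv1 v₀).card ≤ f) :
    ∀ v : Fin n, v ∉ Faulty →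
      (recv1 v).card < n - f ∧
      (∀ w : Fin n, w ∉ Faulty → w ∉ recv2 v) ∧
      output v = false := by
  have hcard : ∀ v : Fin n, v ∉ Faulty → (recv1 v).card < n - f := by
    intro v hv
    have hsub : recv1 v ⊆ recv1 v₀ ∪ Faulty := by
      intro w hw
      by_cases hwF : w ∈ Faulty
      · exact Finset.mem_union_right _ hwF
      · exact Finset.mem_union_left _
          ((hsend1 v₀ w hv₀ hwF).2 ((hsend1 v w hv hwF).1 hw))
    have hle := (Finset.card_le_card hsub).trans (Finset.card_union_le _ _)
    omega
  intro v hv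
  have hsilent : ∀ w : Fin n, w ∉ Faulty → w ∉ recv2 v := fun w hw hmem =>
    (hcard w hw).not_ge ((hsend2 v w hv hw).1 hmem).2
  have hsub : recv2 v ⊆ Faulty := fun w hw => by
    by_contra hwF
    exact hsilent w hwF hw
  exact ⟨hcard v hv, hsilent, houtput v hv ((Finset.card_le_card hsub).trans hF)⟩
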